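/- For all integers ρ ≥ 4, τ ≥ 0 and n ≥ 0 the following holds. Let G be a graph such that for every vertex v, the subgraph induced on the ball of radius ρ around v has chromatic number at most τ. Let X, Z ⊆ V(G) be disjoint sets such that every vertex of Z has a neighbour in X, and the subgraph induced on Z has chromatic number greater than nτ. Then there exist vertices x_1, ..., x_n ∈ X that pairwise have distance at least ρ in G, and such that for all distinct i, j ∈ {1, ..., n} there is a path in G between x_i and x_j with all internal vertices in Z, in which no vertex of {x_1, ..., x_n} \ {x_i, x_j} has a neighbour. -/

import Mathlib

namespace Stmt2

/-- The colouring claim attached to a finite set `R` and a front `S`, `x`. -/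
def Claim {V : Type} (G : SimpleGraph V) {n τ : ℕ} (c : V → V → Fin τ)
    (R : Finset V) (S : Finset (Fin n)) (x : Fin n → V) : Prop :=
  ∃ f : V → Fin n × Fin τ, (∀ u ∈ R, ∀ w ∈ R, G.Adj u w → f u ≠ f w) ∧
    ∀ i ∈ S, ∀ z ∈ R, G.Adj (x i) z → f z = (i, c (x i) z)

theorem dist_succ {V : Type} {G : SimpleGraph V} {x y z : V} (h : G.Adj y z) :
    G.dist x z ≤ G.dist x y + 1 := by
  have := (h.reachable).dist_triangle_right x
  rw [SimpleGraph.dist_eq_one_iff_adj.2 h] at this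
  exact this

theorem no_common {V : Type} {G : SimpleGraph V} {x y z : V} (h : 4 ≤ G.dist x y)
    (h1 : G.Adj x z) (h2 : G.Adj y z) : False := by
  have := dist_succ (x := x) h2.symm
  rw [SimpleGraph.dist_eq_one_iff_adj.2 h1] at this
  omega

/-- direct case -/
theorem direct {V : Type} {G : SimpleGraph V} {ρ n τ : ℕ} (hρ : 4 ≤ ρ) (hn : 0 < n) (c : V → V → Fin τ)
    (hc : ∀ x u w, G.dist x u ≤ ρ → G.dist x w ≤ ρ → G.Adj u w → c x u ≠ c x w)
    (R : Finset V) (S : Finset (Fin n)) (x : Fin n → V)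
    (hfar : ∀ i ∈ S, ∀ j ∈ S, i ≠ j → ρ ≤ G.dist (x i) (x j))
    (hcover : ∀ z ∈ R, ∃ i ∈ S, G.dist (x i) z ≤ ρ) : Claim G c R S x := by
  classical
  have key : ∀ z : V, z ∈ R → ∃ g : Fin n, G.dist (x g) z ≤ ρ ∧
      ∀ i ∈ S, G.Adj (x i) z → i = g := by
    intro z hz
    by_cases h : ∃ i ∈ S, G.Adj (x i) z
    · obtain ⟨i, hi, ha⟩ := h
      refine ⟨i, ?_, ?_⟩
      · rw [SimpleGraph.dist_eq_one_iff_adj.2 ha]; omega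
      · intro j hj hja
        by_contra hne
        exact no_common (hρ.trans (hfar j hj i hi hne)) hja ha
    · obtain ⟨i, hi, hd⟩ := hcover z hz
      exact ⟨i, hd, fun j hj hja => (h ⟨j, hj, hja⟩).elim⟩
  have key' : ∀ z : V, ∃ g : Fin n, z ∈ R → (G.dist (x g) z ≤ ρ ∧
      ∀ i ∈ S, G.Adj (x i) z → i = g) := by
    intro z
    by_cases hz : z ∈ R
    · obtain ⟨g, hg⟩ := key z hz
      exact ⟨g, fun _ => hg⟩
    · exact ⟨⟨0, hn⟩, fun h => (hz h).elim⟩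
  choose g hg using key'
  refine ⟨fun z => (g z, c (x (g z)) z), ?_, ?_⟩
  · intro u hu w hw ha heq
    simp only [Prod.mk.injEq] at heq
    obtain ⟨h1, h2⟩ := heq
    have a1 := (hg u hu).1
    have a2 := (hg w hw).1
    rw [← h1] at h2 a2
    exact hc _ u w a1 a2 ha h2
  · intro i hi z hz ha
    have h := (hg z hz).2 i hi ha
    simp only [← h]

/-- splitting case -/
theorem split {V : Type} {G : SimpleGraph V} {n τ : ℕ} (c : V → V → Fin τ)
    (R : Finset V) (x : Fin n → V)
    (hfar : ∀ i j, i ≠ j → 4 ≤ G.dist (x i) (x j))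
    (hne : ∀ i, ∃ z ∈ R, G.Adj (x i) z)
    (i j : Fin n) (hij : i ≠ j)
    (hbad : ¬ ∃ p : G.Walk (x i) (x j), p.IsPath ∧
        (∀ v ∈ p.support, v ≠ x i → v ≠ x j → v ∈ R) ∧
        (∀ k, k ≠ i → k ≠ j → ∀ v ∈ p.support, ¬ G.Adj (x k) v))
    (ih : ∀ R' ⊂ R, Claim G c R' Finset.univ x) : Claim G c R Finset.univ x := by
  classical
  let U : V → Prop := fun z => ∃ k, k ≠ i ∧ k ≠ j ∧ G.Adj (x k) z
  let P : V → Prop := fun z => ∃ p : G.Walk (x i) z, ∀ v ∈ p.support, v = x i ∨ (v ∈ R ∧ ¬ U v)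
  have hNU : ∀ a z, (a = i ∨ a = j) → G.Adj (x a) z → ¬ U z := by
    rintro a z ha haz ⟨k, hki, hkj, hkz⟩
    refine no_common (hfar k a ?_) hkz haz
    rcases ha with rfl | rfl <;> assumption
  have hPi : ∀ z ∈ R, G.Adj (x i) z → P z := by
    intro z hz ha
    refine ⟨ha.toWalk, ?_⟩
    intro v hv
    simp at hv
    rcases hv with rfl | rfl
    · exact Or.inl rfl
    · exact Or.inr ⟨hz, hNU i v (Or.inl rfl) ha⟩
  have hPstep : ∀ u w, P u → w ∈ R → ¬ U w → G.Adj u w → P w := by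
    rintro u w ⟨p, hp⟩ hw hUw ha
    refine ⟨p.concat ha, ?_⟩
    intro v hv
    rw [SimpleGraph.Walk.support_concat] at hv
    simp at hv
    rcases hv with hv | rfl
    · exact hp v hv
    · exact Or.inr ⟨hw, hUw⟩
  have hPj : ∀ z ∈ R, G.Adj (x j) z → ¬ P z := by
    rintro z hz ha ⟨p, hp⟩
    apply hbad
    have hq : ∀ v ∈ (p.concat ha.symm).bypass.support, v = x i ∨ v = x j ∨ (v ∈ R ∧ ¬ U v) := by
      intro v hv
      have hv := SimpleGraph.Walk.support_bypass_subset_support _ hv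
      rw [SimpleGraph.Walk.support_concat] at hv
      simp at hv
      rcases hv with hv | rfl
      · rcases hp v hv with h | h
        · exact Or.inl h
        · exact Or.inr (Or.inr h)
      · exact Or.inr (Or.inl rfl)
    have hnadj : ∀ k l, k ≠ l → ¬ G.Adj (x k) (x l) := by
      intro k l hkl hadj
      have := hfar k l hkl
      rw [SimpleGraph.dist_eq_one_iff_adj.2 hadj] at this
      omega
    refine ⟨(p.concat ha.symm).bypass, SimpleGraph.Walk.bypass_isPath _, ?_, ?_⟩
    · intro v hv h1 h2
      rcases hq v hv with h | h | h
      · exact (h1 h).elim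
      · exact (h2 h).elim
      · exact h.1
    · intro k hki hkj v hv hadj
      rcases hq v hv with h | h | h
      · subst h; exact hnadj k i hki hadj
      · subst h; exact hnadj k j hkj hadj
      · exact h.2 ⟨k, hki, hkj, hadj⟩
  have h1 : R.filter (fun z => U z ∨ P z) ⊂ R := by
    rw [Finset.filter_ssubset]
    obtain ⟨z, hz, ha⟩ := hne j
    exact ⟨z, hz, fun h => h.elim (hNU j z (Or.inr rfl) ha) (hPj z hz ha)⟩
  have h2 : R.filter (fun z => U z ∨ ¬ P z) ⊂ R := by
    rw [Finset.filter_ssubset]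
    obtain ⟨z, hz, ha⟩ := hne i
    exact ⟨z, hz, fun h => h.elim (hNU i z (Or.inl rfl) ha) (fun h => h (hPi z hz ha))⟩
  obtain ⟨f1, f1p, f1c⟩ := ih _ h1
  obtain ⟨f2, f2p, f2c⟩ := ih _ h2
  simp only [Finset.mem_filter, Finset.mem_univ, true_imp_iff, and_imp] at f1p f1c f2p f2c
  have hU : ∀ z ∈ R, U z → f1 z = f2 z := by
    intro z hz hu
    obtain ⟨k, -, -, hk⟩ := id hu
    rw [f1c k z hz (Or.inl hu) hk, f2c k z hz (Or.inl hu) hk]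
  refine ⟨fun z => if P z then f1 z else f2 z, ?_, ?_⟩
  · intro u hu w hw ha
    by_cases hPu : P u <;> by_cases hPw : P w
    · simp only [hPu, hPw, if_true]
      exact f1p u hu (Or.inr hPu) w hw (Or.inr hPw) ha
    · simp only [hPu, hPw, if_true, if_false]
      by_cases hUw : U w
      · rw [← hU w hw hUw]
        exact f1p u hu (Or.inr hPu) w hw (Or.inl hUw) ha
      · exact (hPw (hPstep u w hPu hw hUw ha)).elim
    · simp only [hPu, hPw, if_true, if_false]
      by_cases hUu : U u
      · rw [← hU u hu hUu]
        exact f1p u hu (Or.inl hUu) w hw (Or.inr hPw) ha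
      · exact (hPu (hPstep w u hPw hu hUu ha.symm)).elim
    · simp only [hPu, hPw, if_false]
      exact f2p u hu (Or.inr hPu) w hw (Or.inr hPw) ha
  · intro k _ z hz ha
    by_cases hPz : P z
    · simp only [hPz, if_true]
      exact f1c k z hz (Or.inr hPz) ha
    · simp only [hPz, if_false]
      exact f2c k z hz (Or.inr hPz) ha

theorem main {V : Type} {G : SimpleGraph V} {ρ n τ : ℕ} (hρ : 4 ≤ ρ) (hn : 0 < n)
    (c : V → V → Fin τ)
    (hc : ∀ x u w, G.dist x u ≤ ρ → G.dist x w ≤ ρ → G.Adj u w → c x u ≠ c x w)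
    (X Z : Set V) (hcov : ∀ z ∈ Z, ∃ x ∈ X, G.Adj z x)
    (hbad : ¬ ∃ x : Fin n → V, (∀ i, x i ∈ X) ∧
      (∀ i j, i ≠ j → ρ ≤ G.dist (x i) (x j)) ∧
      (∀ i j, i ≠ j → ∃ p : G.Walk (x i) (x j), p.IsPath ∧
        (∀ v ∈ p.support, v ≠ x i → v ≠ x j → v ∈ Z) ∧
        (∀ k, k ≠ i → k ≠ j → ∀ v ∈ p.support, ¬ G.Adj (x k) v)))
    (R : Finset V) : ↑R ⊆ Z → ∀ (S : Finset (Fin n)) (x : Fin n → V), (∀ i ∈ S, x i ∈ X) →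
    (∀ i ∈ S, ∀ j ∈ S, i ≠ j → ρ ≤ G.dist (x i) (x j)) → Claim G c R S x := by
  classical
  induction R using Finset.strongInduction with
  | H R ih =>
  intro hRZ
  have inner : ∀ (m : ℕ) (S : Finset (Fin n)) (x : Fin n → V), Sᶜ.card = m →
      (∀ i ∈ S, x i ∈ X) →
      (∀ i ∈ S, ∀ j ∈ S, i ≠ j → ρ ≤ G.dist (x i) (x j)) →
      (∀ i ∈ S, ∃ z ∈ R, G.Adj (x i) z) → Claim G c R S x := by
    intro m
    induction m with
    | zero =>
      intro S x hm hX hfar hne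
      have hS : S = Finset.univ := by simpa using hm
      subst hS
      simp only [Finset.mem_univ, true_imp_iff] at hX hfar hne
      have : ∃ i j, i ≠ j ∧ ¬ ∃ p : G.Walk (x i) (x j), p.IsPath ∧
          (∀ v ∈ p.support, v ≠ x i → v ≠ x j → v ∈ R) ∧
          (∀ k, k ≠ i → k ≠ j → ∀ v ∈ p.support, ¬ G.Adj (x k) v) := by
        by_contra hcon
        apply hbad
        refine ⟨x, hX, hfar, ?_⟩
        intro i j hij
        by_contra hno
        refine hcon ⟨i, j, hij, ?_⟩
        rintro ⟨p, hp1, hp2, hp3⟩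
        exact hno ⟨p, hp1, fun v hv a b => hRZ (hp2 v hv a b), hp3⟩
      obtain ⟨i, j, hij, hno⟩ := this
      refine split c R x (fun i j h => hρ.trans (hfar i j h)) hne i j hij hno ?_
      intro R' hR'
      refine ih R' hR' ?_ _ x (fun i _ => hX i) (fun i _ j _ h => hfar i j h)
      exact fun v hv => hRZ (hR'.1 hv)
    | succ m ihm =>
      intro S x hm hX hfar hne
      by_cases hcover : ∀ z ∈ R, ∃ i ∈ S, G.dist (x i) z ≤ ρ
      · exact direct hρ hn c hc R S x hfar hcover
      · push Not at hcover
        obtain ⟨z, hz, hzfar⟩ := hcover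
        obtain ⟨y, hyX, hzy⟩ := hcov z (hRZ hz)
        have hyfar : ∀ i ∈ S, ρ ≤ G.dist (x i) y := by
          intro i hi
          have := dist_succ (x := x i) hzy.symm
          have := hzfar i hi
          omega
        have : Sᶜ.Nonempty := by
          rw [← Finset.card_pos]; omega
        obtain ⟨a, ha⟩ := this
        have haS : a ∉ S := by simpa using ha
        have hup : ∀ i ∈ S, Function.update x a y i = x i := by
          intro i hi
          rw [Function.update_of_ne]
          rintro rfl; exact haS hi
        have hcl : Claim G c R (insert a S) (Function.update x a y) := by
          apply ihm
          · rw [Finset.compl_insert, Finset.card_erase_of_mem ha]; omega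
          · intro i hi
            rcases Finset.mem_insert.1 hi with rfl | hi
            · simpa using hyX
            · rw [hup i hi]; exact hX i hi
          · intro i hi j hj hij
            rcases Finset.mem_insert.1 hi with rfl | hi2 <;>
              rcases Finset.mem_insert.1 hj with rfl | hj2
            · exact (hij rfl).elim
            · rw [hup j hj2, Function.update_self, SimpleGraph.dist_comm]; exact hyfar j hj2
            · rw [hup i hi2, Function.update_self]; exact hyfar i hi2
            · rw [hup i hi2, hup j hj2]; exact hfar i hi2 j hj2 hij
          · intro i hi
            rcases Finset.mem_insert.1 hi with rfl | hi
            · exact ⟨z, hz, by simpa using hzy.symm⟩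
            · rw [hup i hi]; exact hne i hi
        obtain ⟨f, f1, f2⟩ := hcl
        refine ⟨f, f1, ?_⟩
        intro i hi w hw hiw
        have := f2 i (Finset.mem_insert_of_mem hi) w hw
        rw [hup i hi] at this
        exact this hiw
  intro S x hX hfar
  obtain ⟨f, f1, f2⟩ := inner _ (S.filter (fun i => ∃ z ∈ R, G.Adj (x i) z)) x rfl
    (fun i hi => hX i (Finset.mem_filter.1 hi).1)
    (fun i hi j hj h => hfar i (Finset.mem_filter.1 hi).1 j (Finset.mem_filter.1 hj).1 h)
    (fun i hi => (Finset.mem_filter.1 hi).2)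
  exact ⟨f, f1, fun i hi z hz ha => f2 i (Finset.mem_filter.2 ⟨hi, z, hz, ha⟩) z hz ha⟩

end Stmt2


/-- Theorem 8.1, internalroute: if `χ^ρ(G) ≤ τ` (ρ ≥ 4), `X` covers `Z`, and
`χ(Z) > nτ`, then there are `x 1, …, x n ∈ X`, pairwise at distance at least `ρ`, such that
every two of them are joined by a path with interior in `Z` containing no neighbour of any
other `x k`. -/
theorem stmt_2 {V : Type} (ρ τ n : ℕ) (hρ : 4 ≤ ρ)
    (G : SimpleGraph V)
    (hball : ∀ v : V, (G.induce {u | G.dist v u ≤ ρ}).chromaticNumber ≤ (τ : ℕ∞))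
    (X Z : Set V) (hdisj : Disjoint X Z)
    (hcov : ∀ z ∈ Z, ∃ x ∈ X, G.Adj z x)
    (hchi : (n * τ : ℕ) < (G.induce Z).chromaticNumber) :
    ∃ x : Fin n → V, (∀ i, x i ∈ X) ∧
      (∀ i j, i ≠ j → ρ ≤ G.dist (x i) (x j)) ∧
      (∀ i j, i ≠ j → ∃ p : G.Walk (x i) (x j), p.IsPath ∧
        (∀ v ∈ p.support, v ≠ x i → v ≠ x j → v ∈ Z) ∧
        (∀ k, k ≠ i → k ≠ j → ∀ v ∈ p.support, ¬ G.Adj (x k) v)) := by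
  classical
  rcases Nat.eq_zero_or_pos n with rfl | hn
  · exact ⟨fun i => i.elim0, fun i => i.elim0, fun i => i.elim0, fun i => i.elim0⟩
  by_contra hbad
  have hc : ∀ v : V, ∃ c : V → Fin τ, ∀ u w, G.dist v u ≤ ρ → G.dist v w ≤ ρ →
      G.Adj u w → c u ≠ c w := by
    intro v
    obtain ⟨C⟩ := SimpleGraph.chromaticNumber_le_iff_colorable.1 (hball v)
    have hv : v ∈ {u | G.dist v u ≤ ρ} := by simp
    refine ⟨fun u => if h : G.dist v u ≤ ρ then C ⟨u, h⟩ else C ⟨v, hv⟩, ?_⟩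
    intro u w hu hw ha
    simp only [hu, hw, dif_pos]
    exact C.valid (v := ⟨u, hu⟩) (w := ⟨w, hw⟩) ha
  choose c hc using hc
  have hfin : ∀ R : Finset V, ↑R ⊆ Z → Stmt2.Claim G (n := n) c R ∅ (fun i => by
      by_cases h : Nonempty V
      · exact h.some
      · exfalso
        apply h
        by_contra h'
        rw [not_nonempty_iff] at h'
        have : (G.induce Z).Colorable (n * τ) := ⟨SimpleGraph.Coloring.mk
          (fun z => (h'.false z.1).elim) (fun {z} => (h'.false z.1).elim)⟩
        exact absurd (SimpleGraph.chromaticNumber_le_iff_colorable.2 this) (not_le.2 hchi)) := by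
    intro R hR
    exact Stmt2.main hρ hn c hc X Z hcov hbad R hR ∅ _ (by simp) (by simp)
  have hhom : Nonempty ((G.induce Z) →g (⊤ : SimpleGraph (Fin n × Fin τ))) := by
    apply SimpleGraph.nonempty_hom_of_forall_finite_subgraph_hom
    intro G' hG'
    have hfin' := (hG'.image (Subtype.val))
    have hsub : (↑hfin'.toFinset : Set V) ⊆ Z := by
      intro v hv
      simp at hv
      exact hv.1
    have hcl := hfin hfin'.toFinset hsub
    refine ⟨fun z => hcl.choose z.1.1, ?_⟩
    intro a b hab
    have hadj : G.Adj a.1.1 b.1.1 := G'.adj_sub hab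
    exact hcl.choose_spec.1 _ (by simp) _ (by simp) hadj
  obtain ⟨C⟩ := hhom
  have hcol : (G.induce Z).Colorable (n * τ) := by
    have := SimpleGraph.Coloring.colorable (G := G.induce Z) (α := Fin n × Fin τ) C
    simpa using this
  exact absurd (SimpleGraph.chromaticNumber_le_iff_colorable.2 hcol) (not_le.2 hchi)
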